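/- Let Q be a finite nonassociative commutative Moufang loop whose order is a power of 3, such that Z(Q) is cyclic (there is z ∈ Z(Q) such that every element of Z(Q) is a finite iterated sum z+z+...+z) and every associator of Q lies in Z(Q) (for all x,y,z ∈ Q there exists w ∈ Z(Q) with (x+y)+z = w + (x+(y+z))), so that Q/Z(Q) is associative. Then any two automorphisms φ, ψ of Q satisfying x+φ(x) ∈ Z(Q) and x+ψ(x) ∈ Z(Q) for all x (i.e., any two J-central automorphisms) commute: φ∘ψ = ψ∘φ. -/

import Mathlib

/-- A loop: a quasigroup with a two-sided neutral element. -/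
structure Loop (Q : Type) where
  add : Q → Q → Q
  zero : Q
  addLeftBij : ∀ x, Function.Bijective fun y => add x y
  addRightBij : ∀ x, Function.Bijective fun y => add y x
  zero_add : ∀ x, add zero x = x
  add_zero : ∀ x, add x zero = x

namespace Loop

/-- The center of a loop: elements commuting and associating with everything. -/
def center {Q : Type} (L : Loop Q) : Set Q :=
  {z | (∀ x, L.add z x = L.add x z) ∧
       (∀ x y, L.add z (L.add x y) = L.add (L.add z x) y) ∧
       (∀ x y, L.add x (L.add z y) = L.add (L.add x z) y) ∧
       (∀ x y, L.add x (L.add y z) = L.add (L.add x y) z)}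

/-- A map `α` is central if `Z(Q) + α(x) = Z(Q) + x` for every `x`. -/
def IsCentral {Q : Type} (L : Loop Q) (α : Q → Q) : Prop :=
  ∀ x, (fun z => L.add z (α x)) '' L.center = (fun z => L.add z x) '' L.center

/-- Automorphism of a loop: a bijective map respecting the operation. -/
def IsAut {Q : Type} (L : Loop Q) (f : Q → Q) : Prop :=
  Function.Bijective f ∧ ∀ x y, f (L.add x y) = L.add (f x) (f y)

/-- `neg` provides two-sided inverses for the loop. -/
def IsTwoSidedInv {Q : Type} (L : Loop Q) (neg : Q → Q) : Prop :=
  ∀ x, L.add x (neg x) = L.zero ∧ L.add (neg x) x = L.zero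

/-- Commutative Moufang loop: commutative and satisfying the Moufang identity. -/
def IsCommMoufang {Q : Type} (L : Loop Q) : Prop :=
  (∀ x y, L.add x y = L.add y x) ∧
  (∀ x y z, L.add x (L.add y (L.add x z)) = L.add (L.add (L.add x y) x) z)

end Loop

namespace Loop

/-- `nsmul L n x` is the iterated sum `x + (x + (... + x))` with `n` terms. -/
def nsmul {Q : Type} (L : Loop Q) : ℕ → Q → Q
  | 0, _ => L.zero
  | n + 1, x => L.add x (nsmul L n x)

end Loop

/-!
Write a `J`-central endomorphism as `φ x = -x + a x`. The map `a : Q → Z(Q)` is additive, hence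
kills associators, and so does the additive map `x ↦ 3x`, which also takes values in `Z(Q)`. On the
cyclic group `Z(Q)` the map `a` is multiplication by an integer `m`, so a nontrivial associator is
annihilated by both `m` and `3`, which forces `3 ∣ m`. If also `ψ x = -x + b x`, with `b`
multiplication by `n` on `Z(Q)`, then `a (b x) = (m / 3) • b (3x) = (mn / 3) • 3x` is symmetric in
`a` and `b`, and since `φ (ψ x) = x - a x - b x + a (b x)`, the maps `φ` and `ψ` commute. If there
is no nontrivial associator, then `Q = Z(Q)` and `a (b x) = (mn) • x`.
-/

namespace Loop

variable {Q : Type} {L : Loop Q}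

local infixl:65 " ∔ " => Loop.add L

theorem add_left_cancel {x y z : Q} (e : x ∔ y = x ∔ z) : y = z :=
  (L.addLeftBij x).1 e

theorem add_right_cancel {x y z : Q} (e : y ∔ x = z ∔ x) : y = z :=
  (L.addRightBij x).1 e

theorem exists_add_eq_zero (L : Loop Q) (x : Q) : ∃ x', L.add x x' = L.zero :=
  (L.addLeftBij x).2 L.zero

theorem center_comm {c : Q} (hc : c ∈ L.center) (x : Q) : c ∔ x = x ∔ c :=
  hc.1 x

theorem center_assoc_left {c : Q} (hc : c ∈ L.center) (x y : Q) : c ∔ (x ∔ y) = c ∔ x ∔ y :=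
  hc.2.1 x y

theorem center_assoc_mid {c : Q} (hc : c ∈ L.center) (x y : Q) : x ∔ (c ∔ y) = x ∔ c ∔ y :=
  hc.2.2.1 x y

theorem center_assoc_right {c : Q} (hc : c ∈ L.center) (x y : Q) : x ∔ (y ∔ c) = x ∔ y ∔ c :=
  hc.2.2.2 x y

theorem center_left_comm {c : Q} (hc : c ∈ L.center) (x y : Q) :
    c ∔ (x ∔ y) = x ∔ (c ∔ y) := by
  rw [center_assoc_left hc, center_comm hc, center_assoc_mid hc]

theorem mem_center_of_comm {c : Q} (comm : ∀ x y, x ∔ y = y ∔ x)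
    (hc : ∀ x y, c ∔ (x ∔ y) = c ∔ x ∔ y) : c ∈ L.center := by
  refine ⟨comm c, hc, fun x y => ?_, fun x y => ?_⟩
  · rw [comm x (c ∔ y), ← hc, comm y x, hc, comm c x]
  · rw [comm y c, comm x, ← hc, comm y x, comm c]

theorem zero_mem_center (L : Loop Q) : L.zero ∈ L.center := by
  simp [center, L.zero_add, L.add_zero]

theorem add_mem_center {c d : Q} (hc : c ∈ L.center) (hd : d ∈ L.center) :
    c ∔ d ∈ L.center := by
  refine ⟨fun x => ?_, fun x y => ?_, fun x y => ?_, fun x y => ?_⟩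
  · rw [← center_assoc_left hc, center_comm hd, center_left_comm hc]
  · rw [← center_assoc_left hc, center_assoc_left hd, center_assoc_left hc, center_assoc_left hc]
  · rw [← center_assoc_left hc, center_assoc_mid hc, center_assoc_mid hd, ← center_assoc_right hd]
  · rw [center_assoc_right hd, center_assoc_right hd, center_assoc_right hc, center_assoc_right hd]

theorem mem_center_of_add_eq_zero {c d : Q} (hc : c ∈ L.center) (e : c ∔ d = L.zero) :
    d ∈ L.center := by
  have cancel_right (x : Q) : c ∔ (x ∔ d) = x := by
    rw [center_left_comm hc, e, L.add_zero]
  have cancel_left (x : Q) : c ∔ (d ∔ x) = x := by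
    rw [center_assoc_left hc, e, L.zero_add]
  refine ⟨fun x => ?_, fun x y => ?_, fun x y => ?_, fun x y => ?_⟩ <;>
    apply add_left_cancel (L := L) (x := c)
  · rw [cancel_left, cancel_right]
  · rw [cancel_left, center_assoc_left hc, cancel_left]
  · rw [center_left_comm hc, cancel_left, center_assoc_left hc, cancel_right]
  · rw [center_left_comm hc, cancel_right, cancel_right]

/-- The center of a loop is an abelian group under the loop operation. -/
noncomputable instance centerAddCommGroup : AddCommGroup L.center :=
  letI : Add L.center := ⟨fun c d => ⟨c ∔ d, add_mem_center c.2 d.2⟩⟩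
  letI : Zero L.center := ⟨⟨L.zero, zero_mem_center L⟩⟩
  letI : Neg L.center := ⟨fun c => ⟨(L.exists_add_eq_zero c).choose,
    mem_center_of_add_eq_zero c.2 (L.exists_add_eq_zero c).choose_spec⟩⟩
  { AddGroup.ofRightAxioms
      (fun a b c : L.center => Subtype.ext (center_assoc_left a.2 b c).symm)
      (fun a => Subtype.ext (L.add_zero a))
      (fun a => Subtype.ext (L.exists_add_eq_zero a).choose_spec) with
    add_comm := fun a b => Subtype.ext (center_comm a.2 b) }

theorem coe_add_center (c d : L.center) : ((c + d : L.center) : Q) = c ∔ d := rfl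

theorem coe_zero_center : ((0 : L.center) : Q) = L.zero := rfl

theorem coe_nsmul_center (k : ℕ) (c : L.center) : ((k • c : L.center) : Q) = L.nsmul k c := by
  induction k with
  | zero => rw [zero_nsmul, coe_zero_center, nsmul]
  | succ k ih => rw [succ_nsmul', coe_add_center, ih, nsmul]

theorem isAddCyclic_center
    (hcyc : ∃ z ∈ L.center, ∀ w ∈ L.center, ∃ n : ℕ, w = L.nsmul (n + 1) z) :
    IsAddCyclic L.center := by
  obtain ⟨z, hz, hgen⟩ := hcyc
  refine ⟨⟨z, hz⟩, fun w => ?_⟩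
  obtain ⟨n, hn⟩ := hgen w w.2
  rw [show w = (n + 1) • ⟨z, hz⟩ from Subtype.ext (by rw [coe_nsmul_center, hn])]
  exact AddSubgroup.nsmul_mem_zmultiples _ _

/-- Homomorphisms from a loop to an additively written group, unbundled because the operation of
`L` is not an `Add` instance. -/
def IsAdditive {A : Type*} [Add A] (L : Loop Q) (a : Q → A) : Prop :=
  ∀ x y, a (L.add x y) = a x + a y

namespace IsAdditive

variable {A : Type*} [AddGroup A] {a : Q → A}

theorem map_zero (ha : L.IsAdditive a) : a L.zero = 0 := by
  simpa only [L.zero_add, left_eq_add] using ha L.zero L.zero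

theorem map_eq_zero_of_associator (ha : L.IsAdditive a) {x y z w : Q}
    (e : x ∔ y ∔ z = w ∔ (x ∔ (y ∔ z))) : a w = 0 := by
  have := congrArg a e
  rwa [ha, ha, ha, ha, ha, add_assoc, right_eq_add] at this

theorem exists_zsmul_eq [IsAddCyclic L.center] {a : Q → L.center} (ha : L.IsAdditive a) :
    ∃ m : ℤ, ∀ c : L.center, a c = m • c :=
  AddMonoidHom.map_addCyclic
    { toFun := fun c => a c, map_zero' := ha.map_zero, map_add' := fun c d => ha c d }

end IsAdditive

namespace IsCommMoufang

theorem add_comm (h : L.IsCommMoufang) (x y : Q) : x ∔ y = y ∔ x :=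
  h.1 x y

theorem left_moufang (h : L.IsCommMoufang) (x y z : Q) :
    x ∔ (y ∔ (x ∔ z)) = x ∔ (x ∔ y) ∔ z := by
  rw [h.2, h.add_comm (x ∔ y) x]

theorem add_add_of_add_mem_center (h : L.IsCommMoufang) {x x' : Q} (hc : x ∔ x' ∈ L.center)
    (y : Q) : x' ∔ (x ∔ y) = x ∔ x' ∔ y :=
  add_left_cancel (L := L) (x := x) <| by rw [h.left_moufang, ← center_assoc_mid hc]

theorem add_cancel_of_add_eq_zero (h : L.IsCommMoufang) {x x' : Q} (e : x ∔ x' = L.zero) (y : Q) :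
    x ∔ (x' ∔ y) = y := by
  rw [h.add_comm] at e
  rw [h.add_add_of_add_mem_center (e ▸ zero_mem_center L), e, L.zero_add]

theorem add_add_add_of_add_eq_zero (h : L.IsCommMoufang) {x x' : Q} (e : x ∔ x' = L.zero)
    (y z : Q) : x ∔ (x ∔ y) ∔ (x' ∔ z) = x ∔ (y ∔ z) := by
  rw [← h.left_moufang, h.add_cancel_of_add_eq_zero e]

theorem add_add_add_distrib (h : L.IsCommMoufang) (x y z : Q) :
    x ∔ (x ∔ (y ∔ z)) = x ∔ y ∔ (x ∔ z) := by
  obtain ⟨x', e⟩ := L.exists_add_eq_zero x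
  calc x ∔ (x ∔ (y ∔ z))
      = x ∔ (x' ∔ y ∔ (x ∔ (x ∔ z))) := by
        rw [h.add_comm (x' ∔ y), h.add_add_add_of_add_eq_zero e, h.add_comm z]
    _ = x ∔ (x ∔ (x' ∔ y)) ∔ (x ∔ z) := h.left_moufang _ _ _
    _ = x ∔ y ∔ (x ∔ z) := by rw [h.add_cancel_of_add_eq_zero e]

theorem triple_add_assoc (h : L.IsCommMoufang) (x y z : Q) :
    x ∔ (x ∔ (x ∔ (y ∔ z))) = x ∔ (x ∔ (x ∔ y)) ∔ z := by
  obtain ⟨x', e⟩ := L.exists_add_eq_zero x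
  rw [← h.add_add_add_of_add_eq_zero e y z, h.add_add_add_distrib, h.add_cancel_of_add_eq_zero e]

theorem add_add_add_eq_triple_add (h : L.IsCommMoufang) (x y : Q) :
    x ∔ (x ∔ (x ∔ y)) = x ∔ (x ∔ x) ∔ y := by
  simpa only [L.zero_add, L.add_zero] using h.triple_add_assoc x L.zero y

theorem triple_mem_center (h : L.IsCommMoufang) (x : Q) : x ∔ (x ∔ x) ∈ L.center :=
  mem_center_of_comm h.add_comm fun y z => by
    rw [← h.add_add_add_eq_triple_add, h.triple_add_assoc, h.add_add_add_eq_triple_add]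

/-- The map `x ↦ 3x`, with values in the center. -/
def triple (h : L.IsCommMoufang) (x : Q) : L.center :=
  ⟨x ∔ (x ∔ x), h.triple_mem_center x⟩

theorem isAdditive_triple (h : L.IsCommMoufang) : L.IsAdditive h.triple := by
  intro x y
  have add_add_self : y ∔ (x ∔ (y ∔ y)) = y ∔ (y ∔ y) ∔ x := by
    rw [h.left_moufang, h.add_comm _ y, h.add_add_add_eq_triple_add]
  apply Subtype.ext
  calc x ∔ y ∔ (x ∔ y ∔ (x ∔ y))
      = x ∔ (x ∔ (y ∔ (x ∔ (y ∔ y)))) := by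
        rw [← h.add_add_add_distrib x y y, ← h.add_add_add_distrib x y]
    _ = x ∔ (x ∔ (x ∔ (y ∔ (y ∔ y)))) := by rw [add_add_self, h.add_comm _ x]
    _ = x ∔ (x ∔ x) ∔ (y ∔ (y ∔ y)) := h.add_add_add_eq_triple_add _ _

theorem triple_coe_center (h : L.IsCommMoufang) (c : L.center) : h.triple c = (3 : ℤ) • c := by
  rw [show (3 : ℤ) • c = c + (c + c) by abel]
  rfl

theorem map_triple {A : Type*} [AddGroup A] (h : L.IsCommMoufang) {a : Q → A}
    (ha : L.IsAdditive a) (x : Q) : a (h.triple x) = (3 : ℤ) • a x := by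
  rw [triple, ha, ha, show (3 : ℤ) = 1 + (1 + 1) from rfl, add_zsmul, add_zsmul, one_zsmul]

theorem three_dvd_of_associator_ne_zero (h : L.IsCommMoufang) {a : Q → L.center}
    (ha : L.IsAdditive a) {m : ℤ} (hm : ∀ c : L.center, a c = m • c) {x y z : Q} {w : L.center}
    (e : x ∔ y ∔ z = w ∔ (x ∔ (y ∔ z))) (hw : w ≠ 0) : 3 ∣ m := by
  have three_zsmul : (3 : ℤ) • w = 0 := by
    rw [← h.triple_coe_center, h.isAdditive_triple.map_eq_zero_of_associator e]
  have zsmul_eq_zero : m • w = 0 := by rw [← hm, ha.map_eq_zero_of_associator e]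
  have order_eq : addOrderOf w = 3 := addOrderOf_eq_prime (by exact_mod_cast three_zsmul) hw
  exact_mod_cast order_eq ▸ addOrderOf_dvd_iff_zsmul_eq_zero.2 zsmul_eq_zero

theorem map_map_comm [IsAddCyclic L.center] (h : L.IsCommMoufang)
    (hassocZ : ∀ x y z, ∃ w ∈ L.center, x ∔ y ∔ z = w ∔ (x ∔ (y ∔ z)))
    {a b : Q → L.center} (ha : L.IsAdditive a) (hb : L.IsAdditive b) (x : Q) :
    a (b x) = b (a x) := by
  obtain ⟨m, hm⟩ := ha.exists_zsmul_eq
  obtain ⟨n, hn⟩ := hb.exists_zsmul_eq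
  by_cases hassoc : ∀ x y z, x ∔ (y ∔ z) = x ∔ y ∔ z
  · lift x to L.center using mem_center_of_comm h.add_comm (hassoc x)
    rw [hm, hn, hn, hm, smul_comm]
  · push Not at hassoc
    obtain ⟨u, v, t, hne⟩ := hassoc
    obtain ⟨w, hwZ, e⟩ := hassocZ u v t
    lift w to L.center using hwZ
    have hw : w ≠ 0 := by
      rintro rfl
      exact hne (by rw [e, coe_zero_center, L.zero_add])
    obtain ⟨m, rfl⟩ := h.three_dvd_of_associator_ne_zero ha hm e hw
    obtain ⟨n, rfl⟩ := h.three_dvd_of_associator_ne_zero hb hn e hw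
    calc a (b x)
        = m • b (h.triple x) := by rw [hm, h.map_triple hb, mul_comm, mul_smul]
      _ = n • a (h.triple x) := by rw [hm, hn, smul_smul, smul_smul]; ring_nf
      _ = b (a x) := by rw [hn, h.map_triple ha, mul_comm, mul_smul]

end IsCommMoufang

/-- A self-map `f` of a loop is `J`-central if it agrees with `J : x ↦ -x` modulo the center. -/
def IsJCentral (L : Loop Q) (f : Q → Q) : Prop :=
  ∀ x, L.add x (f x) ∈ L.center

namespace IsJCentral

variable {f g : Q → Q}

/-- The central part `a` of a `J`-central map `f x = -x + a x`. -/
def centralPart (hf : L.IsJCentral f) (x : Q) : L.center :=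
  ⟨x ∔ f x, hf x⟩

theorem isAdditive_centralPart (h : L.IsCommMoufang) (hf : L.IsJCentral f)
    (f_add : ∀ x y, f (x ∔ y) = f x ∔ f y) : L.IsAdditive hf.centralPart := by
  intro x y
  apply Subtype.ext
  apply add_right_cancel (L := L) (x := f x)
  calc x ∔ y ∔ f (x ∔ y) ∔ f x
      = f (x ∔ y) ∔ (x ∔ y ∔ f x) := (h.add_add_of_add_mem_center (hf _) _).symm
    _ = f (x ∔ y) ∔ (x ∔ f x ∔ y) := by
        rw [h.add_comm _ (f x), h.add_add_of_add_mem_center (hf x)]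
    _ = x ∔ f x ∔ (f (x ∔ y) ∔ y) := (center_left_comm (hf x) _ _).symm
    _ = x ∔ f x ∔ (y ∔ (f y ∔ f x)) := by rw [f_add, h.add_comm (f x), h.add_comm _ y]
    _ = x ∔ f x ∔ (y ∔ f y ∔ f x) := by
        have f_add_mem : f y ∔ y ∈ L.center := h.add_comm y (f y) ▸ hf y
        rw [h.add_add_of_add_mem_center f_add_mem, h.add_comm (f y)]
    _ = x ∔ f x ∔ (y ∔ f y) ∔ f x := center_assoc_left (hf x) _ _

theorem comp_add_centralPart (comm : ∀ x y, x ∔ y = y ∔ x) (hf : L.IsJCentral f)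
    (hg : L.IsJCentral g) (hadd : L.IsAdditive hf.centralPart) (x : Q) :
    f (g x) ∔ (hf.centralPart x + hg.centralPart x : L.center) =
      x ∔ hf.centralPart (hg.centralPart x) := by
  set a := hf.centralPart
  set b := hg.centralPart
  have comp_add : f (g x) ∔ b x = x ∔ a (g x) := by
    apply add_left_cancel (L := L) (x := g x)
    rw [center_assoc_right (b x).2, center_assoc_right (a (g x)).2, comm (g x) x]
    exact center_comm (a (g x)).2 (b x)
  calc f (g x) ∔ (a x + b x : L.center)
      = f (g x) ∔ b x ∔ a x := by rw [add_comm, coe_add_center, center_assoc_right (a x).2]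
    _ = x ∔ (a (g x) + a x : L.center) := by
        rw [comp_add, coe_add_center, center_assoc_right (a x).2]
    _ = x ∔ a (b x) := by rw [add_comm, ← hadd]; rfl

end IsJCentral

end Loop

theorem stmt_general {Q : Type} (L : Loop Q) [IsAddCyclic L.center] (h : L.IsCommMoufang)
    (hassocZ : ∀ x y z, ∃ w ∈ L.center,
      L.add (L.add x y) z = L.add w (L.add x (L.add y z)))
    (φ ψ : Q → Q) (hφ : ∀ x y, φ (L.add x y) = L.add (φ x) (φ y))
    (hψ : ∀ x y, ψ (L.add x y) = L.add (ψ x) (ψ y))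
    (hφc : L.IsJCentral φ) (hψc : L.IsJCentral ψ) :
    φ ∘ ψ = ψ ∘ φ := by
  have ha := hφc.isAdditive_centralPart h hφ
  have hb := hψc.isAdditive_centralPart h hψ
  funext x
  apply Loop.add_right_cancel (L := L) (x := (hφc.centralPart x + hψc.centralPart x : L.center))
  calc L.add (φ (ψ x)) (hφc.centralPart x + hψc.centralPart x : L.center)
      = L.add x (hφc.centralPart (hψc.centralPart x)) :=
        hφc.comp_add_centralPart h.add_comm hψc ha x
    _ = L.add x (hψc.centralPart (hφc.centralPart x)) := by rw [h.map_map_comm hassocZ ha hb]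
    _ = L.add (ψ (φ x)) (hφc.centralPart x + hψc.centralPart x : L.center) := by
        rw [add_comm (hφc.centralPart x), hψc.comp_add_centralPart h.add_comm hφc hb]

open Loop in
/-- In a finite nonassociative commutative Moufang 3-loop with cyclic center
and central associators, any two J-central automorphisms commute. -/
theorem stmt {Q : Type} [Finite Q] (L : Loop Q) (h : L.IsCommMoufang)
    (hnonassoc : ∃ x y z, L.add (L.add x y) z ≠ L.add x (L.add y z))
    (hcard : ∃ n : ℕ, Nat.card Q = 3 ^ n)
    (hcyc : ∃ z ∈ L.center, ∀ w ∈ L.center, ∃ n : ℕ, w = nsmul L (n + 1) z)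
    (hassocZ : ∀ x y z, ∃ w ∈ L.center,
      L.add (L.add x y) z = L.add w (L.add x (L.add y z)))
    (φ ψ : Q → Q) (hφ : L.IsAut φ) (hψ : L.IsAut ψ)
    (hφc : ∀ x, L.add x (φ x) ∈ L.center)
    (hψc : ∀ x, L.add x (ψ x) ∈ L.center) :
    φ ∘ ψ = ψ ∘ φ := by
  have := isAddCyclic_center hcyc
  exact stmt_general L h hassocZ φ ψ hφ.2 hψ.2 hφc hψc
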